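/- arXiv:0812.1173 — 4 statements merged into one kernel-verified Lean document; each statement's English description precedes it below -/
import Mathlib

section
/- Let M be a monoid and let e, e′ ∈ M be idempotents that commute (ee′ = e′e). Suppose there exist units w, w′ of M such that e·w = e′·w′. Then e = e′. -/
/-- Let `M` be a monoid and `e, e'` commuting idempotents.
If `e * w = e' * w'` for some units `w, w'` of `M`, then `e = e'`. -/
theorem idempotent_unique_in_unit_factorization {M : Type*} [Monoid M] (e e' : M)
    (he : e * e = e) (he' : e' * e' = e') (hcomm : e * e' = e' * e)
    (h : ∃ w w' : Mˣ, e * (w : M) = e' * (w' : M)) : e = e' := by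
  obtain ⟨w, w', h⟩ := h
  have h1 : e' * e = e := by
    apply w.isUnit.mul_right_cancel
    rw [mul_assoc, h, ← mul_assoc, he']
  have h2 : e * e' = e' := by
    apply w'.isUnit.mul_right_cancel
    rw [mul_assoc, ← h, ← mul_assoc, he]
  rw [← h1, ← hcomm, h2]
end

section
/- Let M be a monoid, e ∈ M an idempotent, and w a unit of M of finite order (wⁿ = 1 for some n ≥ 1). Set f = w·e·w⁻¹. If e·f = f and f·e = f, then f = e. Consequently, two distinct idempotents of M that are conjugate by a unit of finite order are never comparable in the natural partial order on commuting idempotents. -/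
theorem conj_idem_aux {M : Type*} [Monoid M] (e : M) (he : e * e = e)
    (w : Mˣ) (n : ℕ) (hn : 1 ≤ n) (hw : w ^ n = 1)
    (f : M) (hf : f = (w : M) * e * ((w⁻¹ : Mˣ) : M)) (h1 : e * f = f) (h2 : f * e = f) :
    f = e := by
  have hfw : f * (w : M) = w * e := by rw [hf, mul_assoc, Units.inv_mul, mul_one]
  have hew : e * ((w : M) * e) = w * e := by rw [← hfw, ← mul_assoc, h1]
  have key : ∀ k : ℕ, e * ((w : M) ^ k * e) = (w : M) ^ k * e := by
    intro k
    induction k with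
    | zero => simpa using he
    | succ k ih =>
      calc e * ((w : M) ^ (k + 1) * e) = e * (w * ((w : M) ^ k * e)) := by
            rw [pow_succ', mul_assoc]
        _ = e * (w * (e * ((w : M) ^ k * e))) := by rw [ih]
        _ = (e * (w * e)) * ((w : M) ^ k * e) := by simp only [mul_assoc]
        _ = w * (e * ((w : M) ^ k * e)) := by rw [hew, mul_assoc]
        _ = (w : M) ^ (k + 1) * e := by rw [ih, pow_succ', mul_assoc]
  obtain ⟨m, rfl⟩ : ∃ m, n = m + 1 := ⟨n - 1, by omega⟩
  have hinv : w⁻¹ = w ^ m := by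
    rw [inv_eq_iff_mul_eq_one, ← pow_succ', hw]
  have hfe : f * e = e := by
    have h3 := key m
    rw [← Units.val_pow_eq_pow_val, ← hinv] at h3
    rw [hf, mul_assoc, mul_assoc, h3, Units.mul_inv_cancel_left]
  rw [← h2, hfe]

/-- Let `M` be a monoid, `e ∈ M` an idempotent and `w` a unit of finite
order (`w ^ n = 1`, `n ≥ 1`). Set `f = w·e·w⁻¹`. If `e·f = f` and `f·e = f`, then `f = e`.
Consequently, two distinct idempotents of `M` conjugate by a unit of finite order are never
comparable in the natural partial order on commuting idempotents (`f ≤ e` iff `ef = f = fe`). -/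
theorem conjugate_idempotent_le_imp_eq {M : Type*} [Monoid M] (e : M) (he : e * e = e)
    (w : Mˣ) (n : ℕ) (hn : 1 ≤ n) (hw : w ^ n = 1)
    (f : M) (hf : f = (w : M) * e * ((w⁻¹ : Mˣ) : M)) :
    ((e * f = f ∧ f * e = f) → f = e) ∧
      (f ≠ e → ¬ ((e * f = f ∧ f * e = f) ∨ (f * e = e ∧ e * f = e))) := by
  have hA : (e * f = f ∧ f * e = f) → f = e := fun h =>
    conj_idem_aux e he w n hn hw f hf h.1 h.2
  refine ⟨hA, fun hne h => ?_⟩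
  rcases h with h | ⟨h1, h2⟩
  · exact hne (hA h)
  · refine hne (conj_idem_aux f ?_ w⁻¹ n hn (by rw [inv_pow, hw, inv_one]) e ?_ h1 h2).symm
    · rw [hf]
      simp only [mul_assoc, Units.inv_mul_cancel_left]
      rw [← mul_assoc e e, he]
    · rw [hf]
      simp [mul_assoc]
end

section
/- Let M be a monoid, e ∈ M an idempotent, and w₁, w₂ units of M. Suppose f = w₁·e·w₂ is an idempotent and f commutes with g = w₁·e·w₁⁻¹. Then f = g; that is, every idempotent of the double coset that commutes with the conjugate w₁ e w₁⁻¹ is equal to that conjugate. -/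
/-- Let `M` be a monoid, `e` an idempotent and `w₁, w₂` units. If
`f = w₁·e·w₂` is an idempotent commuting with `g = w₁·e·w₁⁻¹`, then `f = g`. -/
theorem idempotent_in_double_coset_eq_conjugate {M : Type*} [Monoid M] (e : M)
    (he : e * e = e) (w₁ w₂ : Mˣ) (f g : M)
    (hf : f = (w₁ : M) * e * (w₂ : M)) (hg : g = (w₁ : M) * e * ((w₁⁻¹ : Mˣ) : M))
    (hfidem : f * f = f) (hcomm : f * g = g * f) : f = g := by
  have h1 : g * f = f := by
    rw [hf, hg]
    calc (w₁ : M) * e * ((w₁⁻¹ : Mˣ) : M) * ((w₁ : M) * e * (w₂ : M))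
        = (w₁ : M) * (e * e) * (w₂ : M) := by simp [mul_assoc]
      _ = _ := by rw [he]
  have h2 : g = f * (((w₂⁻¹ : Mˣ) : M) * ((w₁⁻¹ : Mˣ) : M)) := by
    rw [hf, hg]
    simp [mul_assoc]
  have h3 : f * g = g := by
    rw [h2, ← mul_assoc, hfidem]
  rw [← h1, ← hcomm, h3]
end

section
/- For every natural number n, the monoid algebra over ℂ of the rook monoid R_n (the symmetric inverse monoid of all partial bijections of {1,…,n} under composition) is isomorphic, as a ℂ-algebra, to the direct product ∏_{r=0}^{n} M_{C(n,r)}(ℂ[S_r]) of the algebras of C(n,r) × C(n,r) matrices with entries in the group algebra ℂ[S_r] of the symmetric group S_r, where C(n,r) is the binomial coefficient. -/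
/-- The rook monoid (symmetric inverse monoid) `R_n`: all partial bijections of
`{1,…,n}` under composition. -/
instance rookMonoid (n : ℕ) : Monoid (Fin n ≃. Fin n) where
  mul f g := g.trans f
  one := PEquiv.refl (Fin n)
  mul_assoc f g h := (PEquiv.trans_assoc h g f).symm
  one_mul f := PEquiv.trans_refl f
  mul_one f := PEquiv.refl_trans f

open Classical in
/-- The chosen embeddings represent each orbit of `S_r` on embeddings exactly once. -/
def RookTransversal {n r : ℕ} {ι : Type} (e : ι → Fin r ↪ Fin n) : Prop :=
  ∀ a : Fin r ↪ Fin n, ∃! p : ι × Equiv.Perm (Fin r), ∀ k, a k = e p.1 (p.2 k)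

lemma rook_exists_transversal (n r : ℕ) :
    ∃ e : Fin (n.choose r) → Fin r ↪ Fin n, RookTransversal e := by
  have hc : Fintype.card {s : Finset (Fin n) // s.card = r} = n.choose r := by
    rw [Fintype.card_finset_len, Fintype.card_fin]
  let q := Fintype.equivFinOfCardEq hc
  refine ⟨fun i => ((q.symm i).1.orderEmbOfFin (q.symm i).2).toEmbedding, fun a => ?_⟩
  have hs : (Finset.univ.map a).card = r := by simp
  let i := q ⟨Finset.univ.map a, hs⟩
  have hi : (q.symm i).1 = Finset.univ.map a := by simp [i]
  have hr : ∀ k, ∃ l, (q.symm i).1.orderEmbOfFin (q.symm i).2 l = a k := by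
    intro k
    have : a k ∈ Set.range ((q.symm i).1.orderEmbOfFin (q.symm i).2) := by
      rw [Finset.range_orderEmbOfFin, hi]; simp
    exact this
  choose σ hσ using hr
  have hinj : Function.Injective σ := by
    intro x y h
    apply a.injective
    rw [← hσ, ← hσ, h]
  refine ⟨(i, Equiv.ofBijective σ (Finite.injective_iff_bijective.1 hinj)), fun k => (hσ k).symm, ?_⟩
  rintro ⟨j, τ⟩ h
  have hj : j = i := by
    have : (q.symm j).1 = Finset.univ.map a := by
      rw [← Finset.coe_inj, ← Finset.range_orderEmbOfFin _ (q.symm j).2]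
      ext x
      simp only [Finset.coe_map, Finset.coe_univ, Set.image_univ, Set.mem_range]
      constructor
      · rintro ⟨k, rfl⟩
        exact ⟨τ.symm k, by rw [h]; simp⟩
      · rintro ⟨k, rfl⟩
        exact ⟨τ k, (h k).symm⟩
    rw [← q.apply_symm_apply j]
    simp only [i]
    congr 1
    exact Subtype.ext this
  subst hj
  refine Prod.ext rfl (Equiv.ext fun k => ?_)
  apply ((q.symm i).1.orderEmbOfFin (q.symm i).2).injective
  exact (h k).symm.trans (hσ k).symm

/-- `f` carries `e j` to `e i ∘ σ`. -/
def RookRel {n r : ℕ} {ι : Type} (e : ι → Fin r ↪ Fin n) (f : Fin n ≃. Fin n) (j i : ι)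
    (σ : Equiv.Perm (Fin r)) : Prop :=
  ∀ k, f (e j k) = some (e i (σ k))

lemma RookTransversal.inj {n r : ℕ} {ι : Type} {e : ι → Fin r ↪ Fin n} (h : RookTransversal e)
    {i i' : ι} {σ σ' : Equiv.Perm (Fin r)} (hh : ∀ k, e i (σ k) = e i' (σ' k)) :
    i = i' ∧ σ = σ' := by
  have := (h (σ.toEmbedding.trans (e i))).unique (y₁ := (i, σ)) (y₂ := (i', σ'))
    (fun k => rfl) hh
  exact Prod.ext_iff.1 this

lemma RookTransversal.rel_unique {n r : ℕ} {ι : Type} {e : ι → Fin r ↪ Fin n}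
    (h : RookTransversal e) {f : Fin n ≃. Fin n} {j i i' : ι} {σ σ' : Equiv.Perm (Fin r)}
    (h1 : RookRel e f j i σ) (h2 : RookRel e f j i' σ') : i = i' ∧ σ = σ' :=
  h.inj fun k => Option.some.inj ((h1 k).symm.trans (h2 k))

/-- If `f` is defined on the range of `e j` then it relates it to something. -/
lemma RookTransversal.exists_rel {n r : ℕ} {ι : Type} {e : ι → Fin r ↪ Fin n}
    (h : RookTransversal e) {f : Fin n ≃. Fin n} {j : ι} (hf : ∀ k, ∃ y, f (e j k) = some y) :
    ∃ i σ, RookRel e f j i σ := by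
  choose b hb using hf
  have hinj : Function.Injective b := by
    intro x y hxy
    apply (e j).injective
    exact f.inj (hb x) (by rw [hxy]; exact hb y)
  obtain ⟨p, hp, -⟩ := h ⟨b, hinj⟩
  exact ⟨p.1, p.2, fun k => by rw [hb, ← hp k]; rfl⟩

lemma rook_mul_apply {n : ℕ} (f g : Fin n ≃. Fin n) (x : Fin n) :
    (f * g) x = (g x).bind f := rfl

open Classical in
/-- The matrix of `f` at rank `r`. -/
noncomputable def rookMat {n r : ℕ} {ι : Type} (e : ι → Fin r ↪ Fin n) (f : Fin n ≃. Fin n) :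
    Matrix ι ι (MonoidAlgebra ℂ (Equiv.Perm (Fin r))) :=
  fun i j => ∑ σ, if RookRel e f j i σ then MonoidAlgebra.single σ 1 else 0

lemma rookMat_of_rel {n r : ℕ} {ι : Type} {e : ι → Fin r ↪ Fin n}
    (h : RookTransversal e) {f : Fin n ≃. Fin n} {j i : ι} {σ : Equiv.Perm (Fin r)}
    (h1 : RookRel e f j i σ) : rookMat e f i j = MonoidAlgebra.single σ 1 := by
  classical
  unfold rookMat
  rw [Finset.sum_eq_single σ, if_pos h1]
  · intro τ _ hτ
    exact if_neg fun h2 => hτ (h.rel_unique h2 h1).2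
  · simp

lemma rookMat_of_not_rel {n r : ℕ} {ι : Type} {e : ι → Fin r ↪ Fin n}
    {f : Fin n ≃. Fin n} {j i : ι}
    (h1 : ∀ σ, ¬ RookRel e f j i σ) : rookMat e f i j = 0 := by
  classical
  unfold rookMat
  exact Finset.sum_eq_zero fun σ _ => if_neg (h1 σ)

lemma rookMat_one {n r : ℕ} {ι : Type} [DecidableEq ι] {e : ι → Fin r ↪ Fin n}
    (h : RookTransversal e) : rookMat e 1 = 1 := by
  have h1 : ∀ j, RookRel e 1 j j 1 := fun j k => rfl
  ext1 i j
  by_cases hij : i = j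
  · subst hij
    rw [rookMat_of_rel h (h1 i), Matrix.one_apply_eq, MonoidAlgebra.one_def]
  · rw [Matrix.one_apply_ne hij, rookMat_of_not_rel]
    intro σ hσ
    exact hij (h.rel_unique hσ (h1 j)).1

lemma rookMat_mul {n r : ℕ} {ι : Type} [Fintype ι] {e : ι → Fin r ↪ Fin n}
    (h : RookTransversal e) (f g : Fin n ≃. Fin n) :
    rookMat e (f * g) = rookMat e f * rookMat e g := by
  ext1 i j
  rw [Matrix.mul_apply]
  by_cases hg : ∃ l τ, RookRel e g j l τ
  · obtain ⟨l, τ, hl⟩ := hg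
    rw [Finset.sum_eq_single l]
    · rw [rookMat_of_rel h hl]
      by_cases hf : ∃ σ, RookRel e f l i σ
      · obtain ⟨σ, hσ⟩ := hf
        have : RookRel e (f * g) j i (σ * τ) := by
          intro k
          rw [rook_mul_apply, hl k]
          exact hσ (τ k)
        rw [rookMat_of_rel h hσ, rookMat_of_rel h this, MonoidAlgebra.single_mul_single, one_mul]
      · push Not at hf
        rw [rookMat_of_not_rel hf, zero_mul, rookMat_of_not_rel]
        intro ρ hρ
        apply hf (ρ * τ⁻¹)
        intro k
        have := hρ (τ⁻¹ k)
        rw [rook_mul_apply, hl] at this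
        simpa using this
    · intro l' _ hl'
      rw [rookMat_of_not_rel (f := g), mul_zero]
      intro σ hσ
      exact hl' (h.rel_unique hσ hl).1
    · simp
  · rw [rookMat_of_not_rel, Finset.sum_eq_zero]
    · intro l _
      rw [rookMat_of_not_rel (f := g), mul_zero]
      exact fun τ hτ => hg ⟨l, τ, hτ⟩
    · intro ρ hρ
      apply hg
      apply h.exists_rel
      intro k
      have := hρ k
      rw [rook_mul_apply] at this
      obtain ⟨y, hy, -⟩ := Option.bind_eq_some_iff.1 this
      exact ⟨y, hy⟩

/-- The partial bijection taking `a k` to `b k`. -/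
noncomputable def rookPE {n r : ℕ} (a b : Fin r ↪ Fin n) : Fin n ≃. Fin n where
  toFun x := (Function.partialInv a x).map b
  invFun x := (Function.partialInv b x).map a
  inv x y := by
    have ha := Function.Injective.isPartialInv a.injective
    have hb := Function.Injective.isPartialInv b.injective
    simp only [Option.map_eq_some_iff, ha _ _, hb _ _]
    constructor <;> exact fun ⟨k, h1, h2⟩ => ⟨k, h2, h1⟩

lemma rookPE_iff {n r : ℕ} (a b : Fin r ↪ Fin n) (x y : Fin n) :
    rookPE a b x = some y ↔ ∃ k, a k = x ∧ b k = y := by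
  have ha := Function.Injective.isPartialInv a.injective
  change (Function.partialInv a x).map b = some y ↔ _
  simp only [Option.map_eq_some_iff, ha _ _]

lemma rookMat_rookPE_self {n r : ℕ} {ι : Type} [DecidableEq ι] {e : ι → Fin r ↪ Fin n}
    (h : RookTransversal e) (i j : ι) (σ : Equiv.Perm (Fin r)) :
    rookMat e (rookPE (e j) (σ.toEmbedding.trans (e i)))
      = Matrix.single i j (MonoidAlgebra.single σ 1) := by
  have h1 : RookRel e (rookPE (e j) (σ.toEmbedding.trans (e i))) j i σ :=
    fun k => (rookPE_iff _ _ _ _).2 ⟨k, rfl, rfl⟩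
  ext1 i' j'
  by_cases hj : j = j'
  · subst hj
    by_cases hi : i = i'
    · subst hi
      rw [rookMat_of_rel h h1, Matrix.single_apply_same]
    · rw [rookMat_of_not_rel, Matrix.single_apply_of_row_ne hi]
      exact fun τ hτ => hi (h.rel_unique h1 hτ).1
  · rw [rookMat_of_not_rel, Matrix.single_apply_of_col_ne _ _ hj]
    intro τ hτ
    apply hj
    have h2 : ∀ k, ∃ l, e j l = e j' k := fun k => by
      obtain ⟨l, hl, -⟩ := (rookPE_iff _ _ _ _).1 (hτ k)
      exact ⟨l, hl⟩
    choose s hs using h2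
    have hinj : Function.Injective s := fun x y hxy => (e j').injective (by rw [← hs, ← hs, hxy])
    exact (h.inj (i := j) (i' := j') (σ' := 1)
      (σ := Equiv.ofBijective s (Finite.injective_iff_bijective.1 hinj)) hs).1

lemma rookMat_rookPE_lt {n r s : ℕ} {ι : Type} {e : ι → Fin s ↪ Fin n}
    (a b : Fin r ↪ Fin n) (hrs : r < s) : rookMat e (rookPE a b) = 0 := by
  ext1 i j
  rw [rookMat_of_not_rel]; · rfl
  intro τ hτ
  have h2 : ∀ k, ∃ l, a l = e j k := fun k => by
    obtain ⟨l, hl, -⟩ := (rookPE_iff _ _ _ _).1 (hτ k)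
    exact ⟨l, hl⟩
  choose t ht using h2
  have hinj : Function.Injective t := fun x y hxy => (e j).injective (by rw [← ht, ← ht, hxy])
  have := Fintype.card_le_of_injective t hinj
  simp at this
  omega

open Classical in
lemma rookMat_coeff {n r : ℕ} {ι : Type} (e : ι → Fin r ↪ Fin n) (f : Fin n ≃. Fin n) (i j : ι)
    (σ : Equiv.Perm (Fin r)) :
    (rookMat e f i j).coeff σ = if RookRel e f j i σ then 1 else 0 := by
  unfold rookMat
  rw [MonoidAlgebra.coeff_sum, Finsupp.finsetSum_apply, Finset.sum_eq_single σ]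
  · split_ifs <;> simp
  · intro τ _ hτ
    split_ifs <;> simp [hτ]
  · simp

/-- Every partial bijection is the least one satisfying some relation. -/
lemma rook_exists_min {n : ℕ} {ι : ℕ → Type} (e : ∀ r, ι r → Fin r ↪ Fin n)
    (h : ∀ r, RookTransversal (e r)) (f : Fin n ≃. Fin n) :
    ∃ r, r ≤ n ∧ ∃ i j σ, RookRel (e r) f j i σ ∧ ∀ g, RookRel (e r) g j i σ → f ≤ g := by
  classical
  let s : Finset (Fin n) := Finset.univ.filter fun x => (f x).isSome
  have hs : s.card ≤ n := by simpa using s.card_le_univ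
  refine ⟨s.card, hs, ?_⟩
  let a : Fin s.card ↪ Fin n := (s.orderEmbOfFin rfl).toEmbedding
  obtain ⟨⟨j, τ⟩, hj, -⟩ := h _ a
  have hdom : ∀ x, (f x).isSome ↔ ∃ k, e _ j k = x := by
    intro x
    have h1 : (f x).isSome ↔ x ∈ Set.range (s.orderEmbOfFin rfl) := by
      rw [Finset.range_orderEmbOfFin]; simp [s]
    rw [h1]
    constructor
    · rintro ⟨k, rfl⟩
      exact ⟨τ k, (hj k).symm⟩
    · rintro ⟨k, rfl⟩
      exact ⟨τ.symm k, (hj _).trans (by simp)⟩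
  obtain ⟨i, σ, hσ⟩ := (h _).exists_rel (f := f) (j := j) fun k =>
    Option.isSome_iff_exists.1 ((hdom _).2 ⟨k, rfl⟩)
  refine ⟨i, j, σ, hσ, fun g hg x y hxy => ?_⟩
  have hxy' : f x = some y := hxy
  obtain ⟨k, rfl⟩ := (hdom x).1 (by rw [hxy']; rfl)
  have := hσ k
  rw [hxy'] at this
  change g _ = some y
  rw [hg k, this]

/-- The Munn–Solomon decomposition: the complex monoid algebra of the
rook monoid `R_n` is isomorphic, as a `ℂ`-algebra, to
`∏_{r=0}^{n} M_{C(n,r)}(ℂ[S_r])`. -/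
theorem rookMonoidAlgebra_iso (n : ℕ) :
    Nonempty (MonoidAlgebra ℂ (Fin n ≃. Fin n) ≃ₐ[ℂ]
      Π r : Fin (n + 1), Matrix (Fin (n.choose (r : ℕ))) (Fin (n.choose (r : ℕ)))
        (MonoidAlgebra ℂ (Equiv.Perm (Fin (r : ℕ))))) := by
  classical
  choose e he using rook_exists_transversal n
  let F : (Fin n ≃. Fin n) →* (Π r : Fin (n + 1), Matrix (Fin (n.choose (r : ℕ)))
      (Fin (n.choose (r : ℕ))) (MonoidAlgebra ℂ (Equiv.Perm (Fin (r : ℕ))))) :=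
    { toFun := fun f r => rookMat (e r) f
      map_one' := funext fun r => rookMat_one (he r)
      map_mul' := fun f g => funext fun r => rookMat_mul (he r) f g }
  have hF : ∀ f r, F f r = rookMat (e r) f := fun f r => rfl
  let Φ := MonoidAlgebra.lift ℂ _ _ F
  refine ⟨AlgEquiv.ofBijective Φ ⟨?_, ?_⟩⟩
  · rw [injective_iff_map_eq_zero]
    intro x hx
    by_contra hne
    have hsupp : x.coeff.support.Nonempty := by
      rw [Finsupp.support_nonempty_iff]
      intro h0
      apply hne
      cases x
      simp_all
    obtain ⟨f, hf⟩ := x.coeff.support.exists_maximal hsupp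
    obtain ⟨r, hr, i, j, σ, h1, h2⟩ := rook_exists_min e he f
    have h3 : ((Φ x ⟨r, by omega⟩) i j).coeff σ = 0 := by rw [hx]; rfl
    have h4 : ((Φ x ⟨r, by omega⟩) i j).coeff σ
        = ∑ g ∈ x.coeff.support, x.coeff g * (if RookRel (e r) g j i σ then 1 else 0) := by
      simp only [Φ, MonoidAlgebra.lift_apply, Finsupp.sum, Finset.sum_apply, Matrix.sum_apply,
        MonoidAlgebra.coeff_sum, Finsupp.finsetSum_apply]
      refine Finset.sum_congr rfl fun g _ => ?_
      rw [← rookMat_coeff]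
      rfl
    rw [h4, Finset.sum_eq_single f, if_pos h1, mul_one] at h3
    · exact Finsupp.mem_support_iff.1 hf.1 h3
    · intro g hg hgf
      rw [if_neg, mul_zero]
      intro h5
      exact hgf (le_antisymm (hf.2 hg (h2 g h5)) (h2 g h5))
    · intro h; exact absurd hf.1 h
  · have key : ∀ (m : ℕ) (r : Fin (n + 1)), (r : ℕ) = m → ∀ M,
        Pi.single r M ∈ LinearMap.range Φ.toLinearMap := by
      intro m
      induction m using Nat.strong_induction_on with
      | _ m ih =>
      intro r hr M
      have base : ∀ i j σ (c : ℂ), Pi.single r (Matrix.single i j (MonoidAlgebra.single σ c)) ∈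
          LinearMap.range Φ.toLinearMap := by
        intro i j σ c
        let g := rookPE (e r j) (σ.toEmbedding.trans (e r i))
        have hg : F g = Pi.single r (Matrix.single i j (MonoidAlgebra.single σ 1)) +
            ∑ s ∈ Finset.univ.filter (fun s => s < r), Pi.single s (F g s) := by
          funext t
          rw [Pi.add_apply, Finset.sum_apply]
          rcases lt_trichotomy t r with h | h | h
          · rw [Pi.single_eq_of_ne h.ne, zero_add, Finset.sum_eq_single t]
            · rw [Pi.single_eq_same]
            · intro s _ hs
              rw [Pi.single_eq_of_ne hs.symm]
            · intro h'; simp [h] at h'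
          · subst h
            rw [Pi.single_eq_same, Finset.sum_eq_zero, add_zero]
            · exact rookMat_rookPE_self (he t) i j σ
            · intro s hs
              rw [Pi.single_eq_of_ne]
              simp at hs
              exact hs.ne'
          · rw [Pi.single_eq_of_ne h.ne', Finset.sum_eq_zero, add_zero]
            · exact rookMat_rookPE_lt _ _ h
            · intro s hs
              rw [Pi.single_eq_of_ne]
              simp at hs
              exact (hs.trans h).ne'
        have h1 : F g ∈ LinearMap.range Φ.toLinearMap :=
          ⟨MonoidAlgebra.single g 1, by simp [Φ]⟩
        have h2 : ∑ s ∈ Finset.univ.filter (fun s => s < r), Pi.single s (F g s) ∈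
            LinearMap.range Φ.toLinearMap := by
          refine Submodule.sum_mem _ fun s hs => ih s ?_ s rfl _
          simp at hs
          omega
        have h3 := Submodule.smul_mem _ c (Submodule.sub_mem _ h1 h2)
        rw [sub_eq_of_eq_add hg, ← Pi.single_smul, Matrix.smul_single] at h3
        simpa using h3
      have base2 : ∀ i j (x : MonoidAlgebra ℂ (Equiv.Perm (Fin (r : ℕ)))),
          Pi.single r (Matrix.single i j x) ∈ LinearMap.range Φ.toLinearMap := by
        intro i j x
        induction x using MonoidAlgebra.induction_linear with
        | zero => simp
        | add x y hx hy =>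
          rw [Matrix.single_add, Pi.single_add]
          exact Submodule.add_mem _ hx hy
        | single σ c => exact base i j σ c
      have hsum : (Pi.single r M : Π r : Fin (n + 1), Matrix (Fin (n.choose (r : ℕ)))
          (Fin (n.choose (r : ℕ))) (MonoidAlgebra ℂ (Equiv.Perm (Fin (r : ℕ)))))
          = ∑ i, ∑ j, Pi.single r (Matrix.single i j (M i j)) := by
        conv_lhs => rw [Matrix.matrix_eq_sum_single M]
        simp only [← AddMonoidHom.single_apply, map_sum]
      rw [hsum]
      exact Submodule.sum_mem _ fun i _ => Submodule.sum_mem _ fun j _ => base2 _ _ _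
    intro y
    have : y ∈ LinearMap.range Φ.toLinearMap := by
      rw [← Finset.univ_sum_single y]
      exact Submodule.sum_mem _ fun r _ => key r r rfl _
    exact this
end
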